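/- Let A be a unital C*-algebra, t ∈ A and ε > 0. If dist(t, R(A)) < ε, then t is 2ε-almost regular. -/

import Mathlib

noncomputable section

/-- A closed two-sided ideal of a topological `ℂ`-algebra `A`. -/
structure ClosedIdeal (A : Type*) [NonUnitalNonAssocRing A] [Module ℂ A] [TopologicalSpace A] : Type _ where
  carrier : Submodule ℂ A
  mul_left_mem : ∀ (a x : A), x ∈ carrier → a * x ∈ carrier
  mul_right_mem : ∀ (a x : A), x ∈ carrier → x * a ∈ carrier
  isClosed : IsClosed (carrier : Set A)

/-- `GL(A)`, the set of invertible elements of the unital algebra `A`. -/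
def glSet (A : Type*) [Monoid A] : Set A := {a | IsUnit a}

/-- `R(A)`: the set of elements `a` of a unital algebra `A` such that for every closed
two-sided ideal `I`, if the image of `a` in `A/I` is left- or right-invertible, then it is
invertible.  (The image of `a` in `A/I` is left invertible iff `1 - b * a ∈ I` for some `b`,
right invertible iff `1 - a * b ∈ I` for some `b`, and invertible iff both hold for one `b`.) -/
def regSet (A : Type*) [Ring A] [Module ℂ A] [TopologicalSpace A] : Set A :=
  {a | ∀ I : ClosedIdeal A,
    ((∃ b, 1 - b * a ∈ I.carrier) ∨ (∃ b, 1 - a * b ∈ I.carrier)) →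
    ∃ b, 1 - b * a ∈ I.carrier ∧ 1 - a * b ∈ I.carrier}

/-- `|t| = (t* t)^(1/2)`, via the continuous functional calculus. -/
noncomputable def cstarAbs {A : Type*} [CStarAlgebra A] (t : A) : A :=
  cfc Real.sqrt (star t * t)

/-- `t` is `ε`-almost regular: the closed two-sided ideal generated by `f_ε(|t|)` equals the
closed two-sided ideal generated by `f_ε(|t*|)`, where `f_ε(x) = max (ε - x) 0`.  (Two elements
generate the same closed two-sided ideal iff they belong to exactly the same closed two-sided
ideals.) -/
def AlmostRegular {A : Type*} [CStarAlgebra A] (ε : ℝ) (t : A) : Prop :=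
  ∀ I : ClosedIdeal A,
    (cfc (fun x : ℝ => max (ε - x) 0) (cstarAbs t) ∈ I.carrier ↔
     cfc (fun x : ℝ => max (ε - x) 0) (cstarAbs (star t)) ∈ I.carrier)

/-!
Work in `A ⧸ I` and truncate the inverse of `|t|` at height `ε`: the element
`b = max(|t|, ε)⁻² t*` has norm at most `ε⁻¹`, is a left inverse of `t` modulo `I` when
`f_ε(|t|) ∈ I`, and a right inverse when `f_ε(|t*|) ∈ I`. Let `r ∈ R(A)` with `‖t - r‖ < ε`. If
`b t ≡ 1`, then `b r ≡ 1 - b (t - r)` is invertible by the Neumann series, so `r` is left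
invertible modulo `I`, hence invertible; then so is `b`, and so is `t`. The case `t b ≡ 1` is
symmetric. Finally `t f(|t|) = f(|t*|) t`, so once `t` is invertible modulo `I` the two elements
`f_ε(|t|)` and `f_ε(|t*|)` lie in `I` simultaneously. This gives `ε`-almost regularity, without
the factor `2`.
-/

open Filter Topology Polynomial

section Intertwining

theorem semiconjBy_aeval {R A : Type*} [CommSemiring R] [Semiring A] [Algebra R A] {a x y : A}
    (h : SemiconjBy a x y) (p : R[X]) : SemiconjBy a (aeval x p) (aeval y p) := by
  induction p using Polynomial.induction_on' with
  | add p q hp hq => simpa only [map_add] using hp.add_right hq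
  | monomial n c =>
    simpa only [aeval_monomial] using
      SemiconjBy.mul_right (Algebra.commutes c a).symm (h.pow_right n)

theorem exists_polynomial_tendstoUniformlyOn {s : Set ℝ} (hs : IsCompact s) {f : ℝ → ℝ}
    (hf : ContinuousOn f s) :
    ∃ p : ℕ → ℝ[X], TendstoUniformlyOn (fun n x => (p n).eval x) f atTop s := by
  have : CompactSpace s := isCompact_iff_compactSpace.mp hs
  have hmem : (⟨s.domRestrict f, hf.domRestrict⟩ : C(s, ℝ)) ∈
      closure (polynomialFunctions s : Set C(s, ℝ)) := by
    rw [← Subalgebra.topologicalClosure_coe, polynomialFunctions.topologicalClosure]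
    trivial
  rw [polynomialFunctions_coe, mem_closure_iff_seq_limit] at hmem
  obtain ⟨q, hq, hlim⟩ := hmem
  choose p hp using hq
  refine ⟨p, ?_⟩
  rw [tendstoUniformlyOn_iff_tendstoUniformly_comp_coe]
  rw [ContinuousMap.tendsto_iff_tendstoUniformly] at hlim
  simp only [← hp] at hlim
  exact hlim

theorem semiconjBy_cfc {A : Type*} [Ring A] [StarRing A] [TopologicalSpace A]
    [ContinuousMul A] [T2Space A] [Algebra ℝ A] [ContinuousFunctionalCalculus ℝ A IsSelfAdjoint]
    {a x y : A} (hx : IsSelfAdjoint x) (hy : IsSelfAdjoint y) (h : SemiconjBy a x y) {f : ℝ → ℝ}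
    (hf : ContinuousOn f (spectrum ℝ x ∪ spectrum ℝ y)) :
    SemiconjBy a (cfc f x) (cfc f y) := by
  obtain ⟨p, hp⟩ := exists_polynomial_tendstoUniformlyOn
    ((ContinuousFunctionalCalculus.isCompact_spectrum x).union
      (ContinuousFunctionalCalculus.isCompact_spectrum y)) hf
  have hpcont (z : A) : ∀ᶠ n in atTop, ContinuousOn (p n).eval (spectrum ℝ z) :=
    .of_forall fun n => (p n).continuousOn
  have hlimx := tendsto_cfc_fun (hp.mono Set.subset_union_left) (hpcont x)
  have hlimy := tendsto_cfc_fun (hp.mono Set.subset_union_right) (hpcont y)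
  refine tendsto_nhds_unique (hlimx.const_mul a) ((hlimy.mul_const a).congr fun n => ?_)
  rw [cfc_polynomial (p n) x, cfc_polynomial (p n) y, (semiconjBy_aeval h (p n)).eq]

end Intertwining

section Monoid

variable {M : Type*} [Monoid M] {b r t : M}

theorem isUnit_of_mul_eq_one_of_isUnit_mul_left (hbt : b * t = 1) (hbr : IsUnit (b * r))
    (hr : IsUnit r) : IsUnit t := by
  obtain ⟨u, rfl⟩ := hr
  obtain ⟨v, rfl⟩ := (Units.isUnit_mul_units b u).mp hbr
  exact (Units.isUnit_units_mul v t).mp (hbt ▸ isUnit_one)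

theorem isUnit_of_mul_eq_one_of_isUnit_mul_right (htb : t * b = 1) (hrb : IsUnit (r * b))
    (hr : IsUnit r) : IsUnit t := by
  obtain ⟨u, rfl⟩ := hr
  obtain ⟨v, rfl⟩ := (Units.isUnit_units_mul u b).mp hrb
  exact (Units.isUnit_mul_units t v).mp (htb ▸ isUnit_one)

end Monoid

namespace ClosedIdeal

/-- The two-sided ideal underlying a closed ideal, which gives access to the quotient rings of
the library. -/
def toTwoSidedIdeal {A : Type*} [NonUnitalNonAssocRing A] [Module ℂ A] [TopologicalSpace A]
    (I : ClosedIdeal A) : TwoSidedIdeal A :=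
  .mk' I.carrier I.carrier.zero_mem I.carrier.add_mem I.carrier.neg_mem
    (I.mul_left_mem _ _) (I.mul_right_mem _ _)

variable {A : Type*} [Ring A] [Module ℂ A] [TopologicalSpace A] (I : ClosedIdeal A)

/-- The quotient map `A → A ⧸ I`, as a homomorphism of rings: no topology or star operation on
the quotient is needed. -/
def quotientMap : A →+* I.toTwoSidedIdeal.ringCon.Quotient :=
  I.toTwoSidedIdeal.ringCon.mk'

theorem quotientMap_surjective : Function.Surjective I.quotientMap :=
  RingCon.mk'_surjective _

theorem quotientMap_eq_zero_iff {x : A} : I.quotientMap x = 0 ↔ x ∈ I.carrier := by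
  rw [← TwoSidedIdeal.mem_ker, quotientMap, TwoSidedIdeal.ker_ringCon_mk', toTwoSidedIdeal,
    TwoSidedIdeal.mem_mk', SetLike.mem_coe]

theorem quotientMap_eq_one_iff {x : A} : I.quotientMap x = 1 ↔ 1 - x ∈ I.carrier := by
  rw [← quotientMap_eq_zero_iff, map_sub, map_one, sub_eq_zero, eq_comm]

end ClosedIdeal

theorem mem_regSet_iff {A : Type*} [Ring A] [Module ℂ A] [TopologicalSpace A] {r : A} :
    r ∈ regSet A ↔ ∀ I : ClosedIdeal A,
      ((∃ c, c * I.quotientMap r = 1) ∨ ∃ c, I.quotientMap r * c = 1) →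
        IsUnit (I.quotientMap r) := by
  simp only [regSet, Set.mem_ofPred_eq, isUnit_iff_exists, and_comm,
    ← ClosedIdeal.quotientMap_eq_one_iff, map_mul,
    (ClosedIdeal.quotientMap_surjective _).exists]

theorem regSet_nonempty (A : Type*) [Ring A] [Module ℂ A] [TopologicalSpace A] :
    (regSet A).Nonempty :=
  ⟨1, mem_regSet_iff.mpr fun I _ => by simp⟩

section NormedRing

variable {A : Type*} [NormedRing A] [HasSummableGeomSeries A] [Module ℂ A] {b r t : A}

theorem isUnit_quotientMap_of_left_inverse (I : ClosedIdeal A) (hr : r ∈ regSet A)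
    (hbt : I.quotientMap (b * t) = 1) (hnorm : ‖b * (t - r)‖ < 1) :
    IsUnit (I.quotientMap t) := by
  have hbr : IsUnit (I.quotientMap b * I.quotientMap r) := by
    have hneumann := (isUnit_one_sub_of_norm_lt_one hnorm).map I.quotientMap
    rwa [mul_sub, map_sub, map_sub, map_one, hbt, sub_sub_cancel, map_mul] at hneumann
  have hr_left_inverse : ∃ c, c * I.quotientMap r = 1 := by
    obtain ⟨c, hc⟩ := hbr.exists_left_inv
    exact ⟨c * I.quotientMap b, by rw [mul_assoc, hc]⟩
  exact isUnit_of_mul_eq_one_of_isUnit_mul_left (by rwa [← map_mul]) hbr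
    (mem_regSet_iff.mp hr I (.inl hr_left_inverse))

theorem isUnit_quotientMap_of_right_inverse (I : ClosedIdeal A) (hr : r ∈ regSet A)
    (htb : I.quotientMap (t * b) = 1) (hnorm : ‖(t - r) * b‖ < 1) :
    IsUnit (I.quotientMap t) := by
  have hrb : IsUnit (I.quotientMap r * I.quotientMap b) := by
    have hneumann := (isUnit_one_sub_of_norm_lt_one hnorm).map I.quotientMap
    rwa [sub_mul, map_sub, map_sub, map_one, htb, sub_sub_cancel, map_mul] at hneumann
  have hr_right_inverse : ∃ c, I.quotientMap r * c = 1 := by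
    obtain ⟨c, hc⟩ := hrb.exists_right_inv
    exact ⟨I.quotientMap b * c, by rw [← mul_assoc, hc]⟩
  exact isUnit_of_mul_eq_one_of_isUnit_mul_right (by rwa [← map_mul]) hrb
    (mem_regSet_iff.mp hr I (.inr hr_right_inverse))

end NormedRing

section CStarAlgebra

variable {A : Type*} [CStarAlgebra A] {ε : ℝ} (t : A)

theorem isSelfAdjoint_cstarAbs : IsSelfAdjoint (cstarAbs t) :=
  cfc_predicate _ _

theorem cstarAbs_mul_self : cstarAbs t * cstarAbs t = star t * t := by
  rw [cstarAbs, ← cfc_mul _ _ _ (by fun_prop) (by fun_prop)]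
  nth_rewrite 2 [← cfc_id' ℝ (star t * t)]
  exact cfc_congr fun x hx => Real.mul_self_sqrt (spectrum_star_mul_self_nonneg x hx)

theorem nonneg_of_mem_spectrum_cstarAbs {x : ℝ} (hx : x ∈ spectrum ℝ (cstarAbs t)) :
    0 ≤ x := by
  rw [cstarAbs, cfc_map_spectrum Real.sqrt (star t * t) (.star_mul_self t) (by fun_prop)] at hx
  obtain ⟨y, -, rfl⟩ := hx
  exact Real.sqrt_nonneg y

theorem semiconjBy_cfc_cstarAbs {f : ℝ → ℝ} (hf : Continuous f) :
    SemiconjBy t (cfc f (cstarAbs t)) (cfc f (cstarAbs (star t))) := by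
  have hsq : SemiconjBy t (star t * t) (star (star t) * star t) := by
    rw [star_star, SemiconjBy, mul_assoc]
  exact semiconjBy_cfc (isSelfAdjoint_cstarAbs t) (isSelfAdjoint_cstarAbs (star t))
    (semiconjBy_cfc (.star_mul_self t) (.star_mul_self (star t)) hsq (by fun_prop)) (by fun_prop)

theorem continuous_inv_max_sq (hε : 0 < ε) : Continuous fun x : ℝ => (max x ε ^ 2)⁻¹ :=
  .inv₀ (by fun_prop) fun _ => (pow_pos (lt_max_of_lt_right hε) 2).ne'

/-- The element `max(|t|, ε)⁻² t*`, an inverse of `t` truncated at height `ε > 0`: it inverts `t`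
on either side modulo an ideal in which `|t|`, respectively `|t*|`, is at least `ε`. -/
def truncatedInverse (ε : ℝ) (t : A) : A :=
  cfc (fun x : ℝ => (max x ε ^ 2)⁻¹) (cstarAbs t) * star t

theorem star_truncatedInverse (hε : 0 < ε) :
    star (truncatedInverse ε t) = truncatedInverse ε (star t) := by
  rw [truncatedInverse, star_mul, star_star,
    (cfc_predicate _ (cstarAbs t) : IsSelfAdjoint _).star_eq,
    (semiconjBy_cfc_cstarAbs t (continuous_inv_max_sq hε)).eq, truncatedInverse, star_star]

theorem norm_truncatedInverse_le (hε : 0 < ε) : ‖truncatedInverse ε t‖ ≤ ε⁻¹ := by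
  let g : ℝ → ℝ := fun x => (max x ε ^ 2)⁻¹
  have hg : Continuous g := continuous_inv_max_sq hε
  have hmul_star : truncatedInverse ε t * star (truncatedInverse ε t) =
      cfc (fun x => g x * (x * x) * g x) (cstarAbs t) := by
    rw [cfc_mul _ _ _ (by fun_prop) (by fun_prop), cfc_mul _ _ _ (by fun_prop) (by fun_prop),
      cfc_mul _ _ _ (by fun_prop) (by fun_prop), cfc_id' ℝ (cstarAbs t) (isSelfAdjoint_cstarAbs t),
      cstarAbs_mul_self, truncatedInverse, star_mul, star_star,
      (cfc_predicate g (cstarAbs t) : IsSelfAdjoint _).star_eq]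
    simp only [g, mul_assoc]
  have hbound (x : ℝ) (hx : 0 ≤ x) : ‖g x * (x * x) * g x‖ ≤ ε⁻¹ * ε⁻¹ := by
    have : 0 < max x ε := lt_max_of_lt_right hε
    rw [Real.norm_of_nonneg (by positivity)]
    calc g x * (x * x) * g x ≤ g x * (max x ε * max x ε) * g x := by
          gcongr <;> exact le_max_left x ε
      _ = (max x ε)⁻¹ * (max x ε)⁻¹ := by simp only [g]; field_simp
      _ ≤ ε⁻¹ * ε⁻¹ := by gcongr <;> exact le_max_right x ε
  refine (mul_self_le_mul_self_iff (norm_nonneg _) (by positivity)).mpr ?_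
  rw [← CStarRing.norm_self_mul_star, hmul_star]
  exact norm_cfc_le (by positivity) fun x hx => hbound x (nonneg_of_mem_spectrum_cstarAbs t hx)

theorem one_sub_inv_max_sq_mul_sq (hε : 0 < ε) (x : ℝ) :
    1 - (max x ε ^ 2)⁻¹ * (x * x) = (ε + x) / ε ^ 2 * max (ε - x) 0 := by
  rcases le_total x ε with hx | hx
  · rw [max_eq_right hx, max_eq_left (sub_nonneg.mpr hx)]
    field_simp
    ring
  · have hx0 : x ≠ 0 := (hε.trans_le hx).ne'
    rw [max_eq_left hx, max_eq_right (sub_nonpos.mpr hx)]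
    field_simp
    ring

theorem one_sub_truncatedInverse_mul (hε : 0 < ε) :
    1 - truncatedInverse ε t * t = cfc (fun x : ℝ => (ε + x) / ε ^ 2) (cstarAbs t) *
      cfc (fun x : ℝ => max (ε - x) 0) (cstarAbs t) := by
  have hg := continuous_inv_max_sq hε
  have ha := isSelfAdjoint_cstarAbs t
  calc 1 - truncatedInverse ε t * t
      = 1 - cfc (fun x : ℝ => (max x ε ^ 2)⁻¹) (cstarAbs t) * (cstarAbs t * cstarAbs t) := by
        rw [truncatedInverse, mul_assoc, cstarAbs_mul_self]
    _ = cfc (fun x : ℝ => 1 - (max x ε ^ 2)⁻¹ * (x * x)) (cstarAbs t) := by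
        rw [cfc_sub _ _ _ (by fun_prop) (hg.fun_mul (by fun_prop)).continuousOn,
          cfc_const_one ℝ (cstarAbs t), cfc_mul _ _ _ hg.continuousOn (by fun_prop),
          cfc_mul _ _ _ (by fun_prop) (by fun_prop), cfc_id' ℝ (cstarAbs t)]
    _ = _ := by
        simp only [one_sub_inv_max_sq_mul_sq hε]
        rw [cfc_mul _ _ _ (by fun_prop) (by fun_prop)]

theorem one_sub_mul_truncatedInverse (hε : 0 < ε) :
    1 - t * truncatedInverse ε t = cfc (fun x : ℝ => max (ε - x) 0) (cstarAbs (star t)) *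
      cfc (fun x : ℝ => (ε + x) / ε ^ 2) (cstarAbs (star t)) := by
  have hstar := congrArg star (one_sub_truncatedInverse_mul (star t) hε)
  rwa [← star_truncatedInverse t hε, ← star_mul, star_sub, star_one, star_star, star_mul,
    (cfc_predicate _ (cstarAbs (star t)) : IsSelfAdjoint _).star_eq,
    (cfc_predicate _ (cstarAbs (star t)) : IsSelfAdjoint _).star_eq] at hstar

variable {t} {r : A}

theorem isUnit_quotientMap_of_cfc_cstarAbs_mem (hr : r ∈ regSet A) (htr : ‖t - r‖ < ε)
    (I : ClosedIdeal A) (h : cfc (fun x : ℝ => max (ε - x) 0) (cstarAbs t) ∈ I.carrier) :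
    IsUnit (I.quotientMap t) := by
  have hε : 0 < ε := (norm_nonneg _).trans_lt htr
  refine isUnit_quotientMap_of_left_inverse I hr (b := truncatedInverse ε t) ?_ ?_
  · rw [I.quotientMap_eq_one_iff, one_sub_truncatedInverse_mul t hε]
    exact I.mul_left_mem _ _ h
  · calc ‖truncatedInverse ε t * (t - r)‖ ≤ ‖truncatedInverse ε t‖ * ‖t - r‖ := norm_mul_le _ _
      _ ≤ ε⁻¹ * ‖t - r‖ := by gcongr; exact norm_truncatedInverse_le t hε
      _ < ε⁻¹ * ε := by gcongr
      _ = 1 := inv_mul_cancel₀ hε.ne'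

theorem isUnit_quotientMap_of_cfc_cstarAbs_star_mem (hr : r ∈ regSet A) (htr : ‖t - r‖ < ε)
    (I : ClosedIdeal A) (h : cfc (fun x : ℝ => max (ε - x) 0) (cstarAbs (star t)) ∈ I.carrier) :
    IsUnit (I.quotientMap t) := by
  have hε : 0 < ε := (norm_nonneg _).trans_lt htr
  refine isUnit_quotientMap_of_right_inverse I hr (b := truncatedInverse ε t) ?_ ?_
  · rw [I.quotientMap_eq_one_iff, one_sub_mul_truncatedInverse t hε]
    exact I.mul_right_mem _ _ h
  · calc ‖(t - r) * truncatedInverse ε t‖ ≤ ‖t - r‖ * ‖truncatedInverse ε t‖ := norm_mul_le _ _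
      _ ≤ ‖t - r‖ * ε⁻¹ := by gcongr; exact norm_truncatedInverse_le t hε
      _ < ε * ε⁻¹ := by gcongr
      _ = 1 := mul_inv_cancel₀ hε.ne'

theorem cfc_cstarAbs_mem_iff_of_isUnit {I : ClosedIdeal A} (ht : IsUnit (I.quotientMap t))
    {f : ℝ → ℝ} (hf : Continuous f) :
    cfc f (cstarAbs t) ∈ I.carrier ↔ cfc f (cstarAbs (star t)) ∈ I.carrier := by
  have hsemiconj := (semiconjBy_cfc_cstarAbs t hf).map I.quotientMap
  rw [← I.quotientMap_eq_zero_iff, ← I.quotientMap_eq_zero_iff, ← ht.mul_right_eq_zero,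
    hsemiconj.eq, ht.mul_left_eq_zero]

end CStarAlgebra

theorem almostRegular_two_mul_of_infDist_lt_general {A : Type*} [CStarAlgebra A] (t : A) (ε : ℝ)
    (h : Metric.infDist t (regSet A) < ε) : AlmostRegular ε t := by
  obtain ⟨r, hr, htr⟩ := (Metric.infDist_lt_iff (regSet_nonempty A)).mp h
  rw [dist_eq_norm] at htr
  intro I
  have hiff (ht : IsUnit (I.quotientMap t)) := cfc_cstarAbs_mem_iff_of_isUnit ht
    (f := fun x : ℝ => max (ε - x) 0) (by fun_prop)
  exact ⟨fun hmem => (hiff (isUnit_quotientMap_of_cfc_cstarAbs_mem hr htr I hmem)).mp hmem,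
    fun hmem => (hiff (isUnit_quotientMap_of_cfc_cstarAbs_star_mem hr htr I hmem)).mpr hmem⟩

/-- If `dist(t, R(A)) < ε`, then `t` is `2ε`-almost regular. -/
theorem almostRegular_two_mul_of_infDist_lt {A : Type*} [CStarAlgebra A] (t : A) (ε : ℝ)
    (hε : 0 < ε) (h : Metric.infDist t (regSet A) < ε) :
    AlmostRegular (2 * ε) t :=
  almostRegular_two_mul_of_infDist_lt_general t (2 * ε) (by linarith)
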